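/- Let d ≥ 2 be an integer and ω ∈ [0,1]. Then for every winning vector w ∈ [0,1]^d satisfying (1/d)·Σ_{i=1}^d w_i ≤ ω and every π ∈ Δ_d, one has ℐ_w(π) ≤ ln(d − 1 + d^{−(1−ω)d}). -/

import Mathlib

/-- The standard simplex Δ_d: nonnegative entries summing to 1. -/
def inSimplex {d : ℕ} (p : Fin d → ℝ) : Prop :=
  (∀ i, 0 ≤ p i) ∧ ∑ i, p i = 1

/-- The output distribution W̄π with W̄_{ij} = w_i δ_{ij} + (1 − w_j)/d. -/
noncomputable def Wbar {d : ℕ} (w p : Fin d → ℝ) (i : Fin d) : ℝ :=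
  w i * p i + (∑ j, (1 - w j) * p j) / d

/-- The mutual information ℐ_w(π) = H(W̄π) + ⟨π, w⟩ ln d − ln d, entropy in nats. -/
noncomputable def mutInfo {d : ℕ} (w p : Fin d → ℝ) : ℝ :=
  (∑ i, Real.negMulLog (Wbar w p i)) + (∑ i, p i * w i) * Real.log d - Real.log d

/-!
Write `q = W̄π`. Since `1 - ⟨π, w⟩ = ∑ j, π j * (1 - w j)`, the mutual information is
`H(q) - ln d * ∑ j, π j * (1 - w j)`. Any `x` whose image under the adjoint of `W̄` is at most
`1 - w` satisfies `⟨q, x⟩ ≤ ∑ j, π j * (1 - w j)`, so Gibbs' variational principle with the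
energies `x i * ln d` bounds `ℐ_w(π)` by `ln (∑ i, d ^ (-x i))`, uniformly in `π`. If moreover
`0 ≤ x`, all the terms lie in `[0, 1]`, and a sum of `d` such numbers is at most `d - 1` plus
their product `d ^ (-∑ i, x i)`. For positive `w` with harmonic mean `h`, the choice
`x i = h * (1 / w i - 1)` turns the adjoint constraint into an equality and has
`∑ i, x i = d * (1 - h)`, which by the inequality of harmonic and arithmetic means is at least
`∑ i, (1 - w i) ≥ (1 - ω) * d`.
-/

open Finset in
theorem sum_le_card_sub_one_add_prod {ι R : Type*} [CommRing R] [PartialOrder R] [IsOrderedRing R]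
    {s : Finset ι} {b : ι → R} (hb₀ : ∀ i ∈ s, 0 ≤ b i) (hb₁ : ∀ i ∈ s, b i ≤ 1) :
    ∑ i ∈ s, b i ≤ #s - 1 + ∏ i ∈ s, b i := by
  induction s using Finset.cons_induction with
  | empty => simp
  | cons a s ha ih =>
    rw [Finset.forall_mem_cons] at hb₀ hb₁
    have hprod : ∏ i ∈ s, b i ≤ 1 := Finset.prod_le_one hb₀.2 hb₁.2
    have hgap : 0 ≤ (1 - b a) * (1 - ∏ i ∈ s, b i) :=
      mul_nonneg (sub_nonneg.2 hb₁.1) (sub_nonneg.2 hprod)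
    rw [Finset.sum_cons, Finset.prod_cons, Finset.card_cons]
    push_cast
    calc b a + ∑ i ∈ s, b i
        ≤ b a + (#s - 1 + ∏ i ∈ s, b i) + (1 - b a) * (1 - ∏ i ∈ s, b i) :=
          (add_le_add_right (ih hb₀.2 hb₁.2) _).trans (le_add_of_nonneg_right hgap)
      _ = #s + 1 - 1 + b a * ∏ i ∈ s, b i := by ring

open Finset in
theorem sum_rpow_neg_le {ι : Type*} {s : Finset ι} {a : ℝ} (ha : 1 ≤ a) {x : ι → ℝ}
    (hx : ∀ i ∈ s, 0 ≤ x i) :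
    ∑ i ∈ s, a ^ (-x i) ≤ #s - 1 + a ^ (-∑ i ∈ s, x i) := by
  have ha₀ : 0 < a := one_pos.trans_le ha
  rw [← Finset.sum_neg_distrib, Real.rpow_sum_of_pos ha₀]
  exact sum_le_card_sub_one_add_prod (fun i _ ↦ Real.rpow_nonneg ha₀.le _)
    fun i hi ↦ Real.rpow_le_one_of_one_le_of_nonpos ha (neg_nonpos.2 (hx i hi))

theorem negMulLog_add_mul_le_exp_sub {q : ℝ} (hq : 0 ≤ q) (c : ℝ) :
    Real.negMulLog q + q * c ≤ Real.exp c - q := by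
  have hscaled : Real.negMulLog (q * Real.exp (-c)) ≤ 1 - q * Real.exp (-c) :=
    Real.negMulLog_le_one_sub_self (mul_nonneg hq (Real.exp_nonneg _))
  have hexp : Real.exp c * Real.exp (-c) = 1 := by
    rw [← Real.exp_add, add_neg_cancel, Real.exp_zero]
  have hnegMulLog : Real.negMulLog (Real.exp (-c)) = Real.exp (-c) * c := by
    rw [Real.negMulLog, Real.log_exp, neg_mul_neg]
  rw [Real.negMulLog_mul, hnegMulLog] at hscaled
  calc Real.negMulLog q + q * c
      = Real.exp c * (Real.exp (-c) * Real.negMulLog q + q * (Real.exp (-c) * c)) := by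
        linear_combination (-Real.negMulLog q - q * c) * hexp
    _ ≤ Real.exp c * (1 - q * Real.exp (-c)) := by gcongr
    _ = Real.exp c - q := by linear_combination -q * hexp

theorem sum_negMulLog_add_sum_mul_le_log_sum_exp {ι : Type*} {s : Finset ι} {q : ι → ℝ}
    (hq : ∀ i ∈ s, 0 ≤ q i) (hq_sum : ∑ i ∈ s, q i = 1) (c : ι → ℝ) :
    ∑ i ∈ s, Real.negMulLog (q i) + ∑ i ∈ s, q i * c i ≤
      Real.log (∑ i ∈ s, Real.exp (c i)) := by
  set Z := ∑ i ∈ s, Real.exp (c i) with hZ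
  have hs : s.Nonempty := Finset.nonempty_of_sum_ne_zero (hq_sum ▸ one_ne_zero)
  have hZ_pos : 0 < Z := Finset.sum_pos (fun i _ ↦ Real.exp_pos _) hs
  have hnormalized : ∑ i ∈ s, Real.exp (c i - Real.log Z) = 1 := by
    simp_rw [Real.exp_sub, Real.exp_log hZ_pos]
    rw [← Finset.sum_div, ← hZ, div_self hZ_pos.ne']
  have hsum := Finset.sum_le_sum fun i hi ↦
    negMulLog_add_mul_le_exp_sub (hq i hi) (c i - Real.log Z)
  simp only [mul_sub, Finset.sum_add_distrib, Finset.sum_sub_distrib, ← Finset.sum_mul, hq_sum,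
    hnormalized] at hsum
  linarith

section AdjointCertificate

variable {d : ℕ} {w p x : Fin d → ℝ}

/-- The adjoint `W̄ᵀx` of the channel matrix, in which the constraint on the energies of the
Gibbs bound is expressed; `(∑ i, x i) / d` is the mean of `x`. -/
noncomputable def WbarAdjoint (w x : Fin d → ℝ) (j : Fin d) : ℝ :=
  w j * x j + (1 - w j) * ((∑ i, x i) / d)

/-- A dual certificate for the winning vector `w`: energies `x` that bound `ℐ_w(π)` for all `π` at
once through `mutInfo_le_log_sum_rpow`, and whose total is large enough for the bound in terms
of the mean of `w`. -/
structure IsDualCertificate (w x : Fin d → ℝ) : Prop where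
  nonneg : ∀ i, 0 ≤ x i
  sum_one_sub_le : ∑ i, (1 - w i) ≤ ∑ i, x i
  adjoint_le : ∀ j, WbarAdjoint w x j ≤ 1 - w j

theorem sum_Wbar_mul (w p x : Fin d → ℝ) :
    ∑ i, Wbar w p i * x i = ∑ j, p j * WbarAdjoint w x j := by
  simp only [Wbar, WbarAdjoint, add_mul, mul_add, Finset.sum_add_distrib, ← Finset.mul_sum,
    ← mul_assoc, ← Finset.sum_mul]
  simp only [mul_comm (p _), mul_div_assoc', div_mul_eq_mul_div]

theorem sum_Wbar [NeZero d] (w p : Fin d → ℝ) : ∑ i, Wbar w p i = ∑ j, p j := by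
  have hone : ∀ j, WbarAdjoint w 1 j = 1 := fun j ↦ by simp [WbarAdjoint]
  simpa [hone] using sum_Wbar_mul w p 1

theorem Wbar_nonneg (hw : ∀ i, w i ∈ Set.Icc (0 : ℝ) 1) (hp : ∀ i, 0 ≤ p i) (i : Fin d) :
    0 ≤ Wbar w p i :=
  add_nonneg (mul_nonneg (hw i).1 (hp i)) <| div_nonneg
    (Finset.sum_nonneg fun j _ ↦ mul_nonneg (sub_nonneg.2 (hw j).2) (hp j)) d.cast_nonneg

theorem mutInfo_eq_sub (hp : ∑ i, p i = 1) :
    mutInfo w p = ∑ i, Real.negMulLog (Wbar w p i) - (∑ i, p i * (1 - w i)) * Real.log d := by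
  simp only [mutInfo, mul_sub, mul_one, Finset.sum_sub_distrib, hp]
  ring

theorem mutInfo_le_log_sum_rpow [NeZero d] (hw : ∀ i, w i ∈ Set.Icc (0 : ℝ) 1) (hp : inSimplex p)
    (hx : ∀ j, WbarAdjoint w x j ≤ 1 - w j) :
    mutInfo w p ≤ Real.log (∑ i, (d : ℝ) ^ (-x i)) := by
  obtain ⟨hp₀, hp₁⟩ := hp
  have hd : (0 : ℝ) < d := Nat.cast_pos.2 (NeZero.pos d)
  have henergy : ∑ i, Wbar w p i * x i ≤ ∑ j, p j * (1 - w j) := by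
    rw [sum_Wbar_mul]
    gcongr with j
    exacts [hp₀ j, hx j]
  calc mutInfo w p
      = ∑ i, Real.negMulLog (Wbar w p i) - (∑ j, p j * (1 - w j)) * Real.log d :=
        mutInfo_eq_sub hp₁
    _ ≤ ∑ i, Real.negMulLog (Wbar w p i) - (∑ i, Wbar w p i * x i) * Real.log d := by
        gcongr
    _ = ∑ i, Real.negMulLog (Wbar w p i) + ∑ i, Wbar w p i * (Real.log d * -x i) := by
        rw [Finset.sum_mul, sub_eq_add_neg, ← Finset.sum_neg_distrib]
        congr! 2
        ring
    _ ≤ Real.log (∑ i, Real.exp (Real.log d * -x i)) :=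
        sum_negMulLog_add_sum_mul_le_log_sum_exp (fun i _ ↦ Wbar_nonneg hw hp₀ i)
          ((sum_Wbar w p).trans hp₁) _
    _ = Real.log (∑ i, (d : ℝ) ^ (-x i)) := by simp_rw [Real.rpow_def_of_pos hd]

theorem exists_isDualCertificate_of_pos [NeZero d] (hw₀ : ∀ i, 0 < w i) (hw₁ : ∀ i, w i ≤ 1) :
    ∃ x, IsDualCertificate w x := by
  have hd : (0 : ℝ) < d := Nat.cast_pos.2 (NeZero.pos d)
  have hinv : 0 < ∑ i, (w i)⁻¹ :=
    Finset.sum_pos (fun i _ ↦ inv_pos.2 (hw₀ i)) Finset.univ_nonempty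
  set h := d / ∑ i, (w i)⁻¹ with hh
  have hx_sum : ∑ i, h * ((w i)⁻¹ - 1) = d * (1 - h) := by
    have hh_mul : h * ∑ i, (w i)⁻¹ = d := div_mul_cancel₀ _ hinv.ne'
    rw [← Finset.mul_sum, Finset.sum_sub_distrib, mul_sub, hh_mul, Fin.sum_const, nsmul_one]
    ring
  have harm_le_arith : d * h ≤ ∑ i, w i := by
    simpa [hh, sq, mul_div_assoc] using
      Finset.sq_sum_div_le_sum_sq_div Finset.univ (fun _ ↦ (1 : ℝ)) fun i _ ↦ inv_pos.2 (hw₀ i)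
  refine ⟨fun i ↦ h * ((w i)⁻¹ - 1), fun i ↦ ?_, ?_, fun j ↦ ?_⟩
  · exact mul_nonneg (div_pos hd hinv).le (sub_nonneg.2 ((one_le_inv₀ (hw₀ i)).2 (hw₁ i)))
  · rw [hx_sum, Finset.sum_sub_distrib, Fin.sum_const, nsmul_one]
    linarith
  · rw [WbarAdjoint, hx_sum, mul_div_cancel_left₀ _ hd.ne']
    have hw_inv : w j * (w j)⁻¹ = 1 := mul_inv_cancel₀ (hw₀ j).ne'
    linear_combination h * hw_inv

-- The witness is the limit of the one for positive `w` as the entry `w k` alone tends to `0`.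
theorem exists_isDualCertificate_of_eq_zero (hw₀ : ∀ i, 0 ≤ w i) {k : Fin d} (hk : w k = 0) :
    ∃ x, IsDualCertificate w x := by
  have hd : (d : ℝ) ≠ 0 := Nat.cast_ne_zero.2 k.pos.ne'
  have hx_sum : ∑ i, (Pi.single k (d : ℝ) : Fin d → ℝ) i = d := by simp
  refine ⟨Pi.single k d, fun i ↦ ?_, ?_, fun j ↦ ?_⟩
  · exact (Pi.single_nonneg.2 d.cast_nonneg : (0 : Fin d → ℝ) ≤ Pi.single k (d : ℝ)) i
  · rw [hx_sum, Finset.sum_sub_distrib, Fin.sum_const, nsmul_one]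
    exact sub_le_self _ (Finset.sum_nonneg fun i _ ↦ hw₀ i)
  · have hw_mul : w j * (Pi.single k (d : ℝ) : Fin d → ℝ) j = 0 := by
      rcases eq_or_ne j k with rfl | hjk
      · rw [hk, zero_mul]
      · rw [Pi.single_eq_of_ne hjk, mul_zero]
    rw [WbarAdjoint, hx_sum, div_self hd, hw_mul, zero_add, mul_one]

theorem exists_isDualCertificate [NeZero d] (hw : ∀ i, w i ∈ Set.Icc (0 : ℝ) 1) :
    ∃ x, IsDualCertificate w x := by
  by_cases hzero : ∃ k, w k = 0
  · obtain ⟨k, hk⟩ := hzero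
    exact exists_isDualCertificate_of_eq_zero (fun i ↦ (hw i).1) hk
  · push Not at hzero
    exact exists_isDualCertificate_of_pos (fun i ↦ (hw i).1.lt_of_ne' (hzero i)) fun i ↦ (hw i).2

end AdjointCertificate

theorem stmt4 (d : ℕ) (hd : 2 ≤ d) (ω : ℝ) (hω : ω ∈ Set.Icc (0 : ℝ) 1)
    (w : Fin d → ℝ) (hw : ∀ i, w i ∈ Set.Icc (0 : ℝ) 1)
    (hsum : (1 / (d : ℝ)) * ∑ i, w i ≤ ω)
    (p : Fin d → ℝ) (hp : inSimplex p) :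
    mutInfo w p ≤ Real.log ((d : ℝ) - 1 + (d : ℝ) ^ (-(1 - ω) * (d : ℝ))) := by
  have : NeZero d := ⟨by omega⟩
  have hd_one : (1 : ℝ) ≤ d := Nat.one_le_cast.2 (by omega)
  have hd_pos : (0 : ℝ) < d := one_pos.trans_le hd_one
  obtain ⟨x, hx⟩ := exists_isDualCertificate hw
  have hωx : -∑ i, x i ≤ -(1 - ω) * d := by
    have hw_sum : ∑ i, w i ≤ d * ω := by rwa [one_div, inv_mul_le_iff₀ hd_pos] at hsum
    have hx_sum := hx.sum_one_sub_le
    rw [Finset.sum_sub_distrib, Fin.sum_const, nsmul_one] at hx_sum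
    linarith
  have hZ_pos : 0 < ∑ i, (d : ℝ) ^ (-x i) :=
    Finset.sum_pos (fun i _ ↦ Real.rpow_pos_of_pos hd_pos _) Finset.univ_nonempty
  calc mutInfo w p ≤ Real.log (∑ i, (d : ℝ) ^ (-x i)) := mutInfo_le_log_sum_rpow hw hp hx.adjoint_le
    _ ≤ Real.log (d - 1 + (d : ℝ) ^ (-(1 - ω) * d)) := Real.log_le_log hZ_pos ?_
  calc ∑ i, (d : ℝ) ^ (-x i) ≤ d - 1 + (d : ℝ) ^ (-∑ i, x i) := by
        simpa using sum_rpow_neg_le (s := Finset.univ) hd_one fun i _ ↦ hx.nonneg i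
    _ ≤ d - 1 + (d : ℝ) ^ (-(1 - ω) * d) := by gcongr
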